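/- Let M be a symmetric matrix with entries in {0,1,*}, indexed by a finite set D. Suppose that for every set W of two-element subsets of D, at least one of the following holds: (1) there exist S, T ∈ W (not necessarily distinct) such that M|_{S×T} is not pure; (2) W = {S, T} with S ∩ T = ∅ and M|_{S×T} is pure and *-rectangular; (3) M|_{⋃W} is pure and has no derectangularising sequence (using subsets of ⋃W), where ⋃W is the union of the sets in W. Then M has no derectangularising sequence. -/

import Mathlib

/-- The three possible entries `0`, `1`, `*` of a matrix-partition matrix. -/
inductive Entry : Type
  | zero | one | star
deriving DecidableEq

/-- `hrel M X Y` is the relation `H^M_{X,Y} = {(i,j) ∈ X × Y : M i j = *}`. -/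
def hrel {D : Type} (M : D → D → Entry) (X Y : Set D) : Set (D × D) :=
  {p | p.1 ∈ X ∧ p.2 ∈ Y ∧ M p.1 p.2 = Entry.star}

/-- Composition of relations: `R ∘ S = {(x,z) : ∃ y, (x,y) ∈ R ∧ (y,z) ∈ S}`. -/
def relComp {D : Type} (R S : Set (D × D)) : Set (D × D) :=
  {p | ∃ y, (p.1, y) ∈ R ∧ (y, p.2) ∈ S}

/-- A relation `R ⊆ A × B` is rectangular if `(i,i'),(i,j'),(j,i') ∈ R ⟹ (j,j') ∈ R`. -/
def Rectangular {A B : Type} (R : Set (A × B)) : Prop :=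
  ∀ i j i' j', (i, i') ∈ R → (i, j') ∈ R → (j, i') ∈ R → (j, j') ∈ R

/-- The submatrix `M|_{X×Y}` is pure if it contains no `0` or contains no `1`. -/
def IsPure {D : Type} (M : D → D → Entry) (X Y : Set D) : Prop :=
  (∀ i ∈ X, ∀ j ∈ Y, M i j ≠ Entry.zero) ∨ (∀ i ∈ X, ∀ j ∈ Y, M i j ≠ Entry.one)

/-- The composed relation `H^M_{D₁,D₂} ∘ H^M_{D₂,D₃} ∘ ⋯ ∘ H^M_{D_{k−1},D_k}`
of a sequence of subsets of `D`. -/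
def relChain {D : Type} (M : D → D → Entry) : List (Set D) → Set (D × D)
  | [] => ∅
  | [X] => {p | p.1 = p.2 ∧ p.1 ∈ X}
  | X :: Y :: rest => relComp (hrel M X Y) (relChain M (Y :: rest))

/-- `L = D₁, …, D_k` is a derectangularising sequence of `M`: `k ≥ 2`, every
`M|_{D_i × D_j}` is pure, and the composed relation is not rectangular. -/
def IsDerect {D : Type} (M : D → D → Entry) (L : List (Set D)) : Prop :=
  2 ≤ L.length ∧ (∀ X ∈ L, ∀ Y ∈ L, IsPure M X Y) ∧ ¬ Rectangular (relChain M L)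


theorem relChain_fst {D : Type} (M : D → D → Entry) (X : Set D) (l : List (Set D)) (p : D × D)
    (h : p ∈ relChain M (X :: l)) : p.1 ∈ X := by
  cases l with
  | nil => exact h.2
  | cons Y l => obtain ⟨y, hy, _⟩ := h; exact hy.1

theorem relChain_strong {D : Type} (M : D → D → Entry) (L : List (Set D))
    (h : ∃ X ∈ L, X.Subsingleton) :
    ∀ i j i' j', (i, i') ∈ relChain M L → (j, j') ∈ relChain M L → (i, j') ∈ relChain M L := by
  induction L with
  | nil => simp at h
  | cons X l ih =>
    intro i j i' j' h1 h2
    by_cases hX : X.Subsingleton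
    · have : i = j := hX (relChain_fst M X l _ h1) (relChain_fst M X l _ h2)
      rw [this]; exact h2
    · have hl : ∃ X ∈ l, X.Subsingleton := by
        obtain ⟨Z, hZ, hs⟩ := h
        rcases List.mem_cons.1 hZ with rfl | hZ
        · exact absurd hs hX
        · exact ⟨Z, hZ, hs⟩
      cases l with
      | nil => simp at hl
      | cons Y l =>
        obtain ⟨y, hy, hy'⟩ := h1
        obtain ⟨z, hz, hz'⟩ := h2
        exact ⟨y, hy, ih hl _ _ _ _ hy' hz'⟩

theorem relComp_rect {D : Type} (R S : Set (D × D)) (a b : D)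
    (hR : Rectangular R) (hS : Rectangular S) (h : ∀ p ∈ R, p.2 = a ∨ p.2 = b) :
    Rectangular (relComp R S) := by
  rintro i j i' j' ⟨y1, h1, h1'⟩ ⟨y2, h2, h2'⟩ ⟨y3, h3, h3'⟩
  have e1 := h _ h1
  have e2 := h _ h2
  have e3 := h _ h3
  have key : y1 = y2 ∨ y1 = y3 ∨ y2 = y3 := by
    simp only at e1 e2 e3
    grind
  rcases key with rfl | rfl | rfl
  · exact ⟨y3, h3, hS _ _ _ _ h1' h2' h3'⟩
  · exact ⟨y2, hR _ _ _ _ h1 h2 h3, h2'⟩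
  · exact ⟨y2, h3, h2'⟩

theorem relChain_rect {D : Type} (M : D → D → Entry) (L : List (Set D))
    (h2 : ∀ X ∈ L, ∃ a b, X = {a, b}) (hr : ∀ X ∈ L, ∀ Y ∈ L, Rectangular (hrel M X Y)) :
    Rectangular (relChain M L) := by
  induction L with
  | nil => intro i j i' j' h; exact h.elim
  | cons X l ih =>
    cases l with
    | nil =>
      rintro i j i' j' ⟨h1, _⟩ ⟨h2, _⟩ ⟨h3, h4⟩
      simp only at h1 h2 h3 h4
      exact ⟨by simp only; rw [h3, ← h1, h2], h4⟩
    | cons Y l =>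
      obtain ⟨a, b, hab⟩ := h2 Y (by simp)
      refine relComp_rect _ _ a b (hr _ (by simp) _ (by simp))
        (ih (fun X hX => h2 X (List.mem_cons_of_mem _ hX))
          (fun X hX Y hY => hr X (List.mem_cons_of_mem _ hX) Y (List.mem_cons_of_mem _ hY))) ?_
      rintro p ⟨_, hp, _⟩
      rw [hab] at hp
      exact hp

theorem IsPure.mono' {D : Type} {M : D → D → Entry} {X Y X' Y' : Set D} (h : IsPure M X Y)
    (hX : X' ⊆ X) (hY : Y' ⊆ Y) : IsPure M X' Y' :=
  h.imp (fun h i hi j hj => h i (hX hi) j (hY hj)) (fun h i hi j hj => h i (hX hi) j (hY hj))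

/-- Lemma (tractability criterion): if for every set `W` of two-element subsets of `D`
one of the three properties holds, then `M` has no derectangularising sequence. -/
theorem stmt5 {D : Type} [Fintype D] (M : D → D → Entry)
    (hsym : ∀ i j, M i j = M j i)
    (hcond : ∀ W : Set (Set D), (∀ S ∈ W, S.ncard = 2) →
      ((∃ S ∈ W, ∃ T ∈ W, ¬ IsPure M S T) ∨
       (∃ S T : Set D, W = {S, T} ∧ S ∩ T = ∅ ∧ IsPure M S T ∧
         Rectangular (hrel M S T)) ∨
       (IsPure M (⋃₀ W) (⋃₀ W) ∧
         ¬ ∃ L : List (Set D), (∀ X ∈ L, X ⊆ ⋃₀ W) ∧ IsDerect M L))) :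
    ¬ ∃ L : List (Set D), IsDerect M L := by
  rintro ⟨L, hlen, hpure, hnr⟩
  have hns : ∀ X ∈ L, ¬ X.Subsingleton := by
    intro X hX hs
    exact hnr fun i j i' j' _ h2 h3 => relChain_strong M L ⟨X, hX, hs⟩ _ _ _ _ h3 h2
  have hpair : ∀ X ∈ L, ∃ a ∈ X, ∃ b ∈ X, a ≠ b := fun X hX =>
    Set.not_subsingleton_iff.1 (hns X hX)
  rcases hcond {S | S.ncard = 2 ∧ ∃ X ∈ L, S ⊆ X} (fun S hS => hS.1) with h | h | h
  · obtain ⟨S, ⟨_, X, hX, hSX⟩, T, ⟨_, Y, hY, hTY⟩, hn⟩ := h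
    exact hn ((hpure X hX Y hY).mono' hSX hTY)
  · obtain ⟨S, T, hW, hdisj, -, hrect⟩ := h
    have hmem : ∀ X ∈ L, ∀ a ∈ X, ∀ b ∈ X, a ≠ b → ({a, b} : Set D) = S ∨ ({a, b} : Set D) = T := by
      intro X hX a ha b hb hab
      have : ({a, b} : Set D) ∈ {S : Set D | S.ncard = 2 ∧ ∃ X ∈ L, S ⊆ X} :=
        ⟨Set.ncard_pair hab, X, hX, by rintro x (rfl | rfl) <;> assumption⟩
      rw [hW] at this
      exact this
    have hd : ∀ x, x ∈ S → x ∈ T → False := by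
      intro x h1 h2
      have : x ∈ S ∩ T := ⟨h1, h2⟩
      rw [hdisj] at this
      exact this
    have hX2 : ∀ X ∈ L, ∃ a b, a ≠ b ∧ X = {a, b} := by
      intro X hX
      obtain ⟨a, ha, b, hb, hab⟩ := hpair X hX
      refine ⟨a, b, hab, Set.Subset.antisymm ?_ (by rintro x (rfl | rfl) <;> assumption)⟩
      intro c hc
      by_cases hca : a = c
      · left; exact hca.symm
      have h1 := hmem X hX a ha b hb hab
      have h2 := hmem X hX a ha c hc hca
      have hE : ({a, c} : Set D) = {a, b} := by
        rcases h1 with h1 | h1 <;> rcases h2 with h2 | h2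
        · rw [h1, h2]
        · exact (hd a (by rw [← h1]; simp) (by rw [← h2]; simp)).elim
        · exact (hd a (by rw [← h2]; simp) (by rw [← h1]; simp)).elim
        · rw [h1, h2]
      rw [← hE]; simp
    have hXST : ∀ X ∈ L, X = S ∨ X = T := by
      intro X hX
      obtain ⟨a, b, hab, rfl⟩ := hX2 X hX
      exact hmem _ hX a (by simp) b (by simp) hab
    have hself : ∀ X ∈ L, Rectangular (hrel M X X) := by
      intro X hX
      obtain ⟨a, b, hab, hXe⟩ := hX2 X hX
      rcases hcond {X} (by rintro S rfl; rw [hXe]; exact Set.ncard_pair hab) with h | h | h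
      · obtain ⟨S, rfl, T, rfl, hn⟩ := h
        exact (hn (hpure _ hX _ hX)).elim
      · obtain ⟨S', T', hW', hd', -⟩ := h
        have h1 : S' ∈ ({X} : Set (Set D)) := by rw [hW']; simp
        have h2 : T' ∈ ({X} : Set (Set D)) := by rw [hW']; simp
        rw [Set.mem_singleton_iff] at h1 h2
        rw [h1, h2, Set.inter_self, hXe] at hd'
        exact ((Set.insert_nonempty _ _).ne_empty hd').elim
      · by_contra hcon
        refine h.2 ⟨[X, X], by simp, by simp, ?_, ?_⟩
        · intro Y hY Z hZ
          simp only [List.mem_cons, List.not_mem_nil, or_false, or_self] at hY hZ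
          rw [hY, hZ]
          exact hpure _ hX _ hX
        · have : relChain M [X, X] = hrel M X X := by
            ext ⟨p, q⟩
            constructor
            · rintro ⟨y, hy, hyq, _⟩
              simp only at hyq
              rw [← hyq]; exact hy
            · intro h
              exact ⟨q, h, rfl, h.2.1⟩
          rw [this]; exact hcon
    refine hnr (relChain_rect M L (fun X hX => ?_) ?_)
    · obtain ⟨a, b, -, h⟩ := hX2 X hX
      exact ⟨a, b, h⟩
    · intro X hX Y hY
      by_cases hXY : X = Y
      · rw [← hXY]; exact hself X hX
      rcases hXST X hX with h1 | h1 <;> rcases hXST Y hY with h2 | h2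
      · exact (hXY (h1.trans h2.symm)).elim
      · rw [h1, h2]; exact hrect
      · rw [h1, h2]
        have hsw : ∀ p q, (p, q) ∈ hrel M T S → (q, p) ∈ hrel M S T := by
          rintro p q ⟨h1, h2, h3⟩
          exact ⟨h2, h1, (hsym q p).trans h3⟩
        intro i j i' j' a b c
        obtain ⟨h1, h2, h3⟩ := hrect _ _ _ _ (hsw _ _ a) (hsw _ _ c) (hsw _ _ b)
        exact ⟨h2, h1, (hsym j j').trans h3⟩
      · exact (hXY (h1.trans h2.symm)).elim
  · refine h.2 ⟨L, ?_, hlen, hpure, hnr⟩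
    intro X hX x hx
    obtain ⟨y, hy, hyx⟩ := Set.not_subsingleton_iff.1 (hns X hX) |>.exists_ne x
    exact ⟨{x, y}, ⟨Set.ncard_pair hyx.symm, X, hX, by rintro z (rfl | rfl) <;> assumption⟩, by simp⟩
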